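/- There exists a filter-equivariant function f : List ℕ → List ℕ that acts as the identity on every two-element list with distinct entries (f [x, y] = [x, y] whenever x ≠ y) but is not the identity function; for instance, the function that, for each distinct value x of the input xs taken in order of first occurrence, outputs (xs.count x)^2 copies of x, satisfies f [4, 7, 4, 7, 8] = [4, 4, 4, 4, 7, 7, 7, 7, 8]. Hence a general filter-equivariant function is not determined by its values on two-element lists with distinct entries. -/

import Mathlib

/-- A function `f : List ℕ → List ℕ` is filter-equivariant if it commutes with
`List.filter p` for every Boolean predicate `p`. -/
def FilterEquivariant (f : List ℕ → List ℕ) : Prop :=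
  ∀ (p : ℕ → Bool) (xs : List ℕ), f (xs.filter p) = (f xs).filter p

/-!
Filtering a list preserves both the multiplicity of every surviving value and the order of the first
occurrences of these values. Hence grouping equal entries and replacing each multiplicity `n` by
`φ n` commutes with filtering, whatever `φ` is. On lists without duplicates this operation sees only
`φ 1`, so `φ n = n ^ 2` cannot be told apart from `φ n = n` there.
-/

section

variable {α : Type*}

/-- The list obtained from `xs` by grouping equal entries, in order of first occurrence, and turning
each multiplicity `n` into `φ n`. -/
def replicateCounts [BEq α] (φ : ℕ → ℕ) (xs : List α) : List α :=
  xs.eraseDups.flatMap fun x => List.replicate (φ (xs.count x)) x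

theorem filter_flatMap_replicate (p : α → Bool) (g : α → ℕ) (xs : List α) :
    (xs.flatMap fun x => List.replicate (g x) x).filter p =
      (xs.filter p).flatMap fun x => List.replicate (g x) x := by
  induction xs with
  | nil => rfl
  | cons x xs ih =>
    rw [List.flatMap_cons, List.filter_append, ih]
    by_cases hx : p x
    · rw [List.filter_replicate_of_pos hx, List.filter_cons_of_pos hx, List.flatMap_cons]
    · rw [List.filter_replicate_of_neg hx, List.filter_cons_of_neg hx, List.nil_append]

variable [BEq α] [LawfulBEq α]

theorem eraseDups_filter (p : α → Bool) :
    ∀ xs : List α, (xs.filter p).eraseDups = xs.eraseDups.filter p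
  | [] => rfl
  | x :: xs => by
    have ih : ((xs.filter (!· == x)).filter p).eraseDups =
        (xs.filter (!· == x)).eraseDups.filter p :=
      eraseDups_filter p (xs.filter (!· == x))
    rw [List.eraseDups_cons]
    by_cases hx : p x
    · rw [List.filter_cons_of_pos hx, List.filter_cons_of_pos hx, List.eraseDups_cons,
        List.filter_comm, ih]
    · have ne_of_pos : ∀ y, p y → y ≠ x := fun y hy hyx => hx (hyx ▸ hy)
      have filter_tail : (xs.filter (!· == x)).filter p = xs.filter p := by
        rw [List.filter_filter]
        exact List.filter_congr fun y _ =>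
          Bool.and_eq_left_iff_imp.2 fun hy => by simpa using ne_of_pos y hy
      rw [List.filter_cons_of_neg hx, List.filter_cons_of_neg hx, ← ih, filter_tail]
termination_by xs => xs.length
decreasing_by exact Nat.lt_succ_of_le (List.length_filter_le _ xs)

theorem eraseDups_eq_self_of_nodup {xs : List α} (h : xs.Nodup) : xs.eraseDups = xs := by
  induction xs with
  | nil => rfl
  | cons x xs ih =>
    obtain ⟨hx, hxs⟩ := List.nodup_cons.1 h
    have filter_tail : xs.filter (!· == x) = xs :=
      List.filter_eq_self.2 fun y hy => by simpa using ne_of_mem_of_not_mem hy hx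
    rw [List.eraseDups_cons, filter_tail, ih hxs]

theorem replicateCounts_filter (φ : ℕ → ℕ) (p : α → Bool) (xs : List α) :
    replicateCounts φ (xs.filter p) = (replicateCounts φ xs).filter p := by
  unfold replicateCounts
  rw [eraseDups_filter, filter_flatMap_replicate]
  refine List.flatMap_congr fun x hx => ?_
  rw [List.count_filter (List.of_mem_filter hx)]

theorem replicateCounts_eq_self_of_nodup {φ : ℕ → ℕ} (hφ : φ 1 = 1) {xs : List α}
    (h : xs.Nodup) : replicateCounts φ xs = xs := by
  calc replicateCounts φ xs
      = xs.flatMap fun x => List.replicate (φ (xs.count x)) x := by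
        rw [replicateCounts, eraseDups_eq_self_of_nodup h]
    _ = xs.flatMap fun x => [x] := List.flatMap_congr fun x hx => by
        rw [List.count_eq_one_of_mem h hx, hφ, List.replicate_one]
    _ = xs := List.flatMap_singleton' xs

end

theorem exists_filterEquivariant_id_on_distinct_pairs_not_id :
    ∃ f : List ℕ → List ℕ, FilterEquivariant f ∧
      (∀ x y : ℕ, x ≠ y → f [x, y] = [x, y]) ∧
      f ≠ id ∧
      f [4, 7, 4, 7, 8] = [4, 4, 4, 4, 7, 7, 7, 7, 8] := by
  have value : replicateCounts (· ^ 2) [4, 7, 4, 7, 8] = [4, 4, 4, 4, 7, 7, 7, 7, 8] := by decide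
  refine ⟨replicateCounts (· ^ 2), replicateCounts_filter _, fun x y hxy => ?_, fun h => ?_, value⟩
  · exact replicateCounts_eq_self_of_nodup (one_pow 2) (List.pairwise_pair.2 hxy)
  · rw [h] at value
    exact absurd value (by decide)
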